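/- For variables x₁,…,xₙ, the identity Σ_{λ ∈ F₀, ℓ(λ) ≤ n} (-1)^{(|λ|+r(λ))/2} s_λ(x₁,…,xₙ) = Π_i (1 - x_i) · Π_{i<j} (1 - x_i x_j) holds, where the sum is over self-conjugate partitions λ with at most n rows, s_λ is the Schur polynomial, and r(λ) is the Durfee rank of λ. -/

import Mathlib

open MvPolynomial

/-- The Durfee rank of a Young diagram: the number of diagonal boxes. -/
def durfeeRank (μ : YoungDiagram) : ℕ := (μ.cells.filter fun c => c.1 = c.2).card

/-- Complete homogeneous symmetric polynomial, extended by `0` to negative degrees. -/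
noncomputable def hPoly (n : ℕ) (k : ℤ) : MvPolynomial (Fin n) ℚ :=
  if 0 ≤ k then MvPolynomial.hsymm (Fin n) ℚ k.toNat else 0

/-- The Schur polynomial `s_μ(x₁,…,xₙ)`, defined by the Jacobi–Trudi formula
`s_μ = det (h_{μ_i - i + j})_{1 ≤ i,j ≤ n}` (valid, and used, for `μ` with at most
`n` rows). -/
noncomputable def schurPoly (n : ℕ) (μ : YoungDiagram) : MvPolynomial (Fin n) ℚ :=
  Matrix.det (Matrix.of fun i j : Fin n =>
    hPoly n ((μ.rowLen (i : ℕ) : ℤ) - ((i : ℤ) + 1) + ((j : ℤ) + 1)))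

/-! Multiply both sides by the Vandermonde determinant `a_δ = det (x_j ^ (n - 1 - i))`.

On the left, Jacobi–Trudi turns `s_μ a_δ` into the alternant `a_{μ + δ}`. On the right, the Weyl
denominator formula of type `B` gives `det (x_j ^ (n - 1 - i) - x_j ^ (n + i))`, whose expansion by
rows is a signed sum over the sets `S ⊆ {0, …, n - 1}` of rows in which the second monomial is
chosen. A self-conjugate partition with at most `n` rows is determined by its set `S` of diagonal
arm lengths, and `μ + δ` is, up to order, the exponent sequence of the term of `S`: counting rows
from `1`, the `i`-th diagonal box, of arm length `s`, gives `μ_i + n - i = n + s`, while the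
remaining rows give `n - 1 - (i - 1 - μ_i)`. The sign of the sorting permutation is `(-1) ^ ∑ s`,
and `(|μ| + r) / 2 = ∑ (s + 1)`. -/

section Alternant

open Finset

variable {R : Type*} [CommRing R] {ι : Type*} [Fintype ι] [DecidableEq ι] {n : ℕ}

/-- The alternant `a_α(x) = det (x_j ^ α_i)`. The Schur polynomials are its quotients by the
Vandermonde determinant. -/
def alternant (x : ι → R) (a : ι → ℕ) : R :=
  (Matrix.of fun i j => x j ^ a i).det

lemma alternant_comp_perm (x : ι → R) (a : ι → ℕ) (σ : Equiv.Perm ι) :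
    alternant x (a ∘ σ) = (σ.sign : ℤ) * alternant x a :=
  Matrix.det_permute σ (Matrix.of fun i j => x j ^ a i)

lemma det_pow_sub_pow_eq_sum_alternant (x : ι → R) (a b : ι → ℕ) :
    (Matrix.of fun i j => x j ^ a i - x j ^ b i).det =
      ∑ S : Finset ι, (-1) ^ #S * alternant x (S.piecewise b a) := by
  have hadd : (Matrix.of fun i j => x j ^ a i - x j ^ b i).det =
      Matrix.detRowAlternating ((fun i j => (-1) * x j ^ b i) + fun i j => x j ^ a i) :=
    congrArg Matrix.det (by ext i j; simp [sub_eq_neg_add])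
  rw [hadd, AlternatingMap.map_add_univ]
  refine sum_congr rfl fun S _ => ?_
  rw [← prod_const, ← smul_eq_mul, alternant]
  refine Eq.trans ?_ (Matrix.detRowAlternating.toMultilinearMap.map_piecewise_smul (fun _ => -1)
    (fun i j => x j ^ S.piecewise b a i) S)
  refine congrArg Matrix.detRowAlternating (funext fun i => ?_)
  by_cases hi : i ∈ S <;> simp [hi, funext_iff]

/-- The exponent sequence `δ = (n - 1, n - 2, …, 0)`, whose alternant is the Vandermonde
determinant. -/
def staircase (n : ℕ) (i : Fin n) : ℕ := i.rev

lemma alternant_staircase (x : Fin n → R) :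
    alternant x (staircase n) = ∏ i, ∏ j ∈ Ioi i, (x i - x j) := by
  have h := Matrix.det_projVandermonde (fun _ => 1) x
  simp only [one_mul] at h
  rw [← h, ← Matrix.det_transpose, alternant]
  congr 1
  ext i j
  simp [Matrix.projVandermonde_apply, staircase]

lemma alternant_staircase_ne_zero [IsDomain R] {x : Fin n → R} (hx : Function.Injective x) :
    alternant x (staircase n) ≠ 0 := by
  rw [alternant_staircase]
  exact prod_ne_zero_iff.2 fun i _ => prod_ne_zero_iff.2 fun j hj =>
    sub_ne_zero.2 (hx.ne (mem_Ioi.1 hj).ne)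

lemma sum_map_valEmbedding_eq_sum_powerset_range {M : Type*} [AddCommMonoid M] (n : ℕ)
    (f : Finset ℕ → M) :
    ∑ S : Finset (Fin n), f (S.map Fin.valEmbedding) = ∑ S ∈ (range n).powerset, f S := by
  refine sum_nbij' (fun S => S.map Fin.valEmbedding) (fun S => ({i | (i : ℕ) ∈ S} : Finset (Fin n)))
    (fun S _ => mem_powerset.2 fun s hs => ?_) (fun S _ => mem_univ _) (fun S _ => ?_)
    (fun S hS => ?_) (fun _ _ => rfl)
  · obtain ⟨i, -, rfl⟩ := mem_map.1 hs
    exact mem_range.2 i.isLt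
  · ext i
    simp [Fin.val_inj]
  · ext s
    simp only [mem_map, mem_filter_univ, Fin.valEmbedding_apply]
    exact ⟨fun ⟨_, hi, his⟩ => his ▸ hi,
      fun hs => ⟨⟨s, mem_range.1 (mem_powerset.1 hS hs)⟩, hs, rfl⟩⟩

end Alternant

section WeylDenominator

open Finset
open scoped Polynomial

variable {R : Type*} [CommRing R] {n : ℕ}

lemma eval_homogenize_eq_sum (p : R[X]) (v w : R) (d : ℕ) :
    eval ![v, w] (p.homogenize d) =
      ∑ j : Fin (d + 1), v ^ (j : ℕ) * w ^ (j.rev : ℕ) * p.coeff j := by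
  rw [Polynomial.homogenize, map_sum, Nat.sum_antidiagonal_eq_sum_range_succ_mk,
    ← Fin.sum_univ_eq_sum_range]
  refine sum_congr rfl fun j _ => ?_
  rw [eval_monomial, Finsupp.prod_fintype _ _ (by simp), Fin.prod_univ_two, mul_comm]
  simp [Fin.val_rev]

lemma det_eval_homogenize (v w : Fin n → R) (p : Fin n → R[X])
    (hdeg : ∀ i, (p i).natDegree = i) (hmonic : ∀ i, (p i).Monic) :
    (Matrix.of fun i j => eval ![v j, w j] ((p i).homogenize (n - 1))).det =
      ∏ i, ∏ j ∈ Ioi i, (v j * w i - v i * w j) := by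
  rw [← Matrix.det_projVandermonde, ← mul_one (Matrix.projVandermonde v w).det,
    ← Matrix.det_matrixOfPolynomials p hdeg hmonic, ← Matrix.det_mul, ← Matrix.det_transpose]
  congr 1
  ext i j
  obtain _ | n := n
  · exact i.elim0
  · simp [eval_homogenize_eq_sum, Matrix.mul_apply, Matrix.projVandermonde_apply]

/-- The fourth-kind Chebyshev polynomials, rescaled so that
`W_i (x + x⁻¹) = x ^ i + x ^ (i - 1) + ⋯ + x ^ (-i)`. -/
noncomputable def chebyshevW (R : Type*) [CommRing R] : ℕ → R[X]
  | 0 => 1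
  | 1 => Polynomial.X + 1
  | i + 2 => Polynomial.X * chebyshevW R (i + 1) - chebyshevW R i

lemma monic_and_natDegree_chebyshevW [Nontrivial R] :
    ∀ i, (chebyshevW R i).Monic ∧ (chebyshevW R i).natDegree = i
  | 0 => by simp [chebyshevW]
  | 1 => ⟨Polynomial.monic_X_add_C 1, Polynomial.natDegree_X_add_C 1⟩
  | i + 2 => by
    obtain ⟨-, hdeg⟩ := monic_and_natDegree_chebyshevW i
    obtain ⟨hmonic', hdeg'⟩ := monic_and_natDegree_chebyshevW (i + 1)
    have hmonic := Polynomial.monic_X.mul hmonic'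
    have hlead : (Polynomial.X * chebyshevW R (i + 1)).natDegree = i + 2 := by
      rw [Polynomial.natDegree_X_mul hmonic'.ne_zero, hdeg']
    constructor
    · exact hmonic.sub_of_left (Polynomial.degree_lt_degree (by omega))
    · rw [chebyshevW, Polynomial.natDegree_sub_eq_left_of_natDegree_lt (by omega), hlead]

lemma one_sub_mul_eval_homogenize_chebyshevW [Nontrivial R] (x : R) (e : ℕ) : ∀ i,
    (1 - x) * eval ![1 + x ^ 2, x] ((chebyshevW R i).homogenize (e + i)) =
      x ^ e - x ^ (e + 2 * i + 1)
  | 0 => by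
    simp only [chebyshevW, add_zero, Polynomial.homogenize_one, map_pow, eval_X,
      Matrix.cons_val_one, Matrix.cons_val_fin_one]
    ring
  | 1 => by
    simp only [chebyshevW, Polynomial.homogenize_add, Polynomial.homogenize_X e.add_one_ne_zero,
      Polynomial.homogenize_one, add_tsub_cancel_right, map_add, map_mul, map_pow, eval_X,
      Matrix.cons_val_zero, Matrix.cons_val_one, Matrix.cons_val_fin_one]
    ring
  | i + 2 => by
    have ih := one_sub_mul_eval_homogenize_chebyshevW x (e + 2) i
    have ih' := one_sub_mul_eval_homogenize_chebyshevW x e (i + 1)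
    have hrec : (chebyshevW R (i + 2)).homogenize (e + (i + 2)) =
        MvPolynomial.X 0 * (chebyshevW R (i + 1)).homogenize (e + (i + 1)) -
          (chebyshevW R i).homogenize (e + 2 + i) := by
      have hdeg := (monic_and_natDegree_chebyshevW (R := R) (i + 1)).2
      rw [chebyshevW, Polynomial.homogenize_sub, show e + (i + 2) = e + 2 + i by ring]
      congr 1
      rw [show e + 2 + i = 1 + (e + (i + 1)) by ring,
        Polynomial.homogenize_mul _ _ Polynomial.natDegree_X_le (by omega),
        Polynomial.homogenize_X one_ne_zero, Nat.sub_self, pow_zero, mul_one]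
    rw [hrec, map_sub, map_mul, mul_sub, mul_left_comm, ih, ih', eval_X, Matrix.cons_val_zero]
    ring

lemma det_weyl_denominator (x : Fin n → R) :
    (Matrix.of fun i j : Fin n => x j ^ staircase n i - x j ^ (n + i : ℕ)).det =
      (∏ i, (1 - x i)) * (∏ i, ∏ j ∈ Ioi i, (1 - x i * x j)) * alternant x (staircase n) := by
  nontriviality R
  have hentry (i j : Fin n) : x j ^ staircase n i - x j ^ (n + i : ℕ) =
      (1 - x j) * eval ![1 + x j ^ 2, x j] ((chebyshevW R i).homogenize (n - 1)) := by
    have h := one_sub_mul_eval_homogenize_chebyshevW (x j) (staircase n i) i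
    rw [staircase, Fin.val_rev] at *
    rw [show n - 1 = n - (i + 1) + i by omega, h]
    congr 2
    omega
  have hmul := Matrix.det_mul_row (fun j => 1 - x j) (Matrix.of fun i j : Fin n =>
    eval ![1 + x j ^ 2, x j] ((chebyshevW R i).homogenize (n - 1)))
  simp only [Matrix.of_apply] at hmul
  simp only [hentry]
  rw [hmul, det_eval_homogenize _ _ (fun i : Fin n => chebyshevW R i)
    (fun i => (monic_and_natDegree_chebyshevW i).2) (fun i => (monic_and_natDegree_chebyshevW i).1),
    alternant_staircase, mul_assoc]
  simp only [← prod_mul_distrib]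
  refine prod_congr rfl fun i _ => congrArg _ (prod_congr rfl fun j _ => ?_)
  ring

lemma prod_filter_lt_eq_prod_prod_Ioi {M : Type*} [CommMonoid M] (f : Fin n → Fin n → M) :
    ∏ p : Fin n × Fin n with p.1 < p.2, f p.1 p.2 = ∏ i, ∏ j ∈ Ioi i, f i j := by
  simp_rw [prod_filter, Fintype.prod_prod_type, ← prod_filter, filter_lt_eq_Ioi]

end WeylDenominator

section Bialternant

open Finset
open scoped Polynomial

section GeneratingFunction

variable {R : Type*} [CommRing R] (σ : Type*) [Fintype σ] [DecidableEq σ]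

lemma coeff_prod_mk_pow_eq_hsymm (m : ℕ) :
    PowerSeries.coeff m (∏ l : σ, PowerSeries.mk fun a => (X l : MvPolynomial σ R) ^ a) =
      hsymm σ R m := by
  rw [PowerSeries.coeff_prod, hsymm]
  symm
  refine sum_bij (fun s _ => Multiset.toFinsupp s.1) (fun s _ => ?_)
    (fun s _ t _ h => Subtype.ext (Multiset.toFinsupp.injective h)) (fun f hf => ?_)
    (fun s _ => ?_)
  · refine mem_finsuppAntidiag.2 ⟨?_, subset_univ _⟩
    exact (Multiset.sum_count_eq_card fun i _ => mem_univ i).trans s.2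
  · refine ⟨⟨Finsupp.toMultiset f, ?_⟩, mem_univ _, Finsupp.toMultiset_toFinsupp f⟩
    rw [Finsupp.card_toMultiset, Finsupp.sum_fintype _ _ fun _ => rfl]
    exact (mem_finsuppAntidiag.1 hf).1
  · simp only [PowerSeries.coeff_mk, Multiset.toFinsupp_apply, prod_multiset_map_count]
    refine prod_subset (subset_univ _) fun i _ hi => ?_
    rw [Multiset.count_eq_zero_of_notMem (mt Multiset.mem_toFinset.2 hi), pow_zero]

lemma mk_pow_mul_one_sub_C_mul_X (x : R) :
    (PowerSeries.mk fun a => x ^ a) * (1 - PowerSeries.C x * PowerSeries.X) = 1 := by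
  have h := congrArg (PowerSeries.rescale x) (PowerSeries.mk_one_mul_one_sub_eq_one R)
  simpa [PowerSeries.rescale_mk, PowerSeries.rescale_X] using h

lemma coeff_mul_coe_eq_sum_range {N : ℕ} (H : PowerSeries R) {p : R[X]} (hp : p.natDegree < N)
    (a : ℕ) :
    PowerSeries.coeff a (H * (p : PowerSeries R)) =
      ∑ m ∈ range N, (if m ≤ a then PowerSeries.coeff (a - m) H else 0) * p.coeff m := by
  have hcoe : (p : PowerSeries R) =
      ∑ m ∈ range N, PowerSeries.C (p.coeff m) * PowerSeries.X ^ m := by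
    conv_lhs => rw [p.as_sum_range_C_mul_X_pow' hp, ← Polynomial.coeToPowerSeries.ringHom_apply]
    simp
  rw [hcoe, mul_sum, map_sum]
  refine sum_congr rfl fun m _ => ?_
  rw [mul_left_comm, PowerSeries.coeff_C_mul, PowerSeries.coeff_mul_X_pow', mul_comm]

variable {σ}

/-- The polynomial `∏_{l ≠ k} (1 - x_l t)` in `t`, whose coefficients are, up to sign, the
elementary symmetric polynomials in the variables other than `x_k`. -/
noncomputable def omitProd (R : Type*) [CommRing R] (k : σ) : (MvPolynomial σ R)[X] :=
  ∏ l ∈ univ.erase k, (1 - Polynomial.C (X l) * Polynomial.X)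

lemma natDegree_omitProd_lt (k : σ) : (omitProd R k).natDegree < Fintype.card σ := by
  have hle : (omitProd R k).natDegree ≤ ∑ l ∈ univ.erase k, 1 :=
    (Polynomial.natDegree_prod_le _ _).trans (sum_le_sum fun l _ => by compute_degree)
  rw [← card_eq_sum_ones] at hle
  exact hle.trans_lt (card_erase_lt_of_mem (mem_univ k))

lemma prod_mk_pow_mul_omitProd (k : σ) :
    (∏ l : σ, PowerSeries.mk fun a => (X l : MvPolynomial σ R) ^ a) *
      (omitProd R k : PowerSeries (MvPolynomial σ R)) = PowerSeries.mk fun a => X k ^ a := by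
  rw [← mul_prod_erase _ _ (mem_univ k), mul_assoc, omitProd,
    ← Polynomial.coeToPowerSeries.ringHom_apply, map_prod, ← prod_mul_distrib]
  simp [mk_pow_mul_one_sub_C_mul_X]

end GeneratingFunction

variable {n : ℕ}

lemma hPoly_natCast_sub (a m : ℕ) :
    hPoly n ((a : ℤ) - m) = if m ≤ a then hsymm (Fin n) ℚ (a - m) else 0 := by
  simp [hPoly]

lemma sum_hPoly_mul_coeff_omitProd (k : Fin n) (a : ℕ) :
    ∑ m ∈ range n, hPoly n ((a : ℤ) - m) * (omitProd ℚ k).coeff m = X k ^ a := by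
  have hdeg := natDegree_omitProd_lt (R := ℚ) k
  rw [Fintype.card_fin] at hdeg
  have h := congrArg (PowerSeries.coeff a) (prod_mk_pow_mul_omitProd (R := ℚ) k)
  rw [coeff_mul_coe_eq_sum_range _ hdeg, PowerSeries.coeff_mk] at h
  simpa only [hPoly_natCast_sub, ← coeff_prod_mk_pow_eq_hsymm] using h

lemma hPoly_mul_omitProd_coeff (b : Fin n → ℕ) :
    (Matrix.of fun i j => hPoly n ((b i : ℤ) - staircase n j)) *
        Matrix.of (fun j k => (omitProd ℚ k).coeff (staircase n j)) =
      Matrix.of fun i k => X k ^ b i := by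
  ext1 i k
  rw [Matrix.mul_apply, Matrix.of_apply, ← sum_hPoly_mul_coeff_omitProd k (b i),
    ← Fin.sum_univ_eq_sum_range fun m => hPoly n ((b i : ℤ) - m) * (omitProd ℚ k).coeff m,
    ← Equiv.sum_comp Fin.revPerm]
  simp only [staircase, Fin.revPerm_apply, Fin.rev_rev, Matrix.of_apply]

lemma det_hPoly_staircase_sub_staircase :
    (Matrix.of fun i j => hPoly n ((staircase n i : ℤ) - staircase n j)).det = 1 := by
  rw [Matrix.det_of_isUpperTriangular]
  · simp [hPoly]
  · intro i j hij
    have hlt : (staircase n i : ℤ) < staircase n j := by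
      exact_mod_cast Fin.rev_lt_rev.2 hij
    exact if_neg (by omega)

lemma det_hPoly_mul_alternant_staircase (b : Fin n → ℕ) :
    (Matrix.of fun i j => hPoly n ((b i : ℤ) - staircase n j)).det * alternant X (staircase n) =
      alternant X b := by
  have hstair := congrArg Matrix.det (hPoly_mul_omitProd_coeff (staircase n))
  rw [Matrix.det_mul, det_hPoly_staircase_sub_staircase, one_mul] at hstair
  rw [alternant, ← hstair, ← Matrix.det_mul, hPoly_mul_omitProd_coeff, alternant]

lemma schurPoly_mul_alternant_staircase (μ : YoungDiagram) :
    schurPoly n μ * alternant X (staircase n) =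
      alternant X fun i : Fin n => μ.rowLen i + staircase n i := by
  rw [← det_hPoly_mul_alternant_staircase fun i => μ.rowLen i + staircase n i, schurPoly]
  congr 2
  ext1 i j
  simp only [Matrix.of_apply]
  congr 1
  simp only [staircase, Fin.val_rev]
  omega

end Bialternant

section FrobeniusCoordinates

open Finset

/-- The arm lengths `μ_i - i` (with `i` counted from `1`) of the diagonal boxes of a Young diagram,
i.e. the first half of its Frobenius coordinates. -/
def armLengths (μ : YoungDiagram) : Finset ℕ :=
  {c ∈ μ.cells | c.1 = c.2}.image fun c => μ.rowLen c.1 - (c.1 + 1)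

/-- The number of elements of `S` that are at least `d`. If `S` is the set of arm lengths of a Young
diagram, this is the number of its boxes on the `d`-th superdiagonal `j - i = d`. -/
def diagLen (S : Finset ℕ) (d : ℕ) : ℕ := #{s ∈ S | d ≤ s}

lemma diagLen_antitone (S : Finset ℕ) : Antitone (diagLen S) :=
  fun _ _ h => card_le_card (monotone_filter_right S fun _ _ hs => h.trans hs)

lemma diagLen_le_diagLen_add (S : Finset ℕ) (d e : ℕ) : diagLen S d ≤ diagLen S (d + e) + e := by
  have hsub : {s ∈ S | d ≤ s} ⊆ {s ∈ S | d + e ≤ s} ∪ Ico d (d + e) := fun s hs => by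
    simp only [mem_union, mem_filter, mem_Ico] at hs ⊢
    grind
  simpa [diagLen] using (card_le_card hsub).trans (card_union_le _ _)

lemma diagLen_le_sub {S : Finset ℕ} {N : ℕ} (hS : S ⊆ range N) (d : ℕ) : diagLen S d ≤ N - d := by
  have hsub : {s ∈ S | d ≤ s} ⊆ Ico d N := fun s hs =>
    mem_Ico.2 ⟨(mem_filter.1 hs).2, mem_range.1 (hS (mem_filter.1 hs).1)⟩
  simpa [diagLen] using card_le_card hsub

lemma diagLen_succ_lt_diagLen_iff (S : Finset ℕ) (s : ℕ) :
    diagLen S (s + 1) < diagLen S s ↔ s ∈ S := by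
  have hsub : {t ∈ S | s + 1 ≤ t} ⊆ {t ∈ S | s ≤ t} :=
    monotone_filter_right S fun _ _ ht => (Nat.le_succ s).trans ht
  refine ⟨fun h => by_contra fun hs => h.ne (congrArg card (filter_congr fun t ht => ?_)),
    fun hs => card_lt_card ((ssubset_iff_of_subset hsub).2 ⟨s, by simp [hs], by simp⟩)⟩
  exact ⟨fun hst => (Nat.le_succ s).trans hst,
    fun hst => Nat.succ_le_of_lt (hst.lt_of_ne fun h => hs (h ▸ ht))⟩

lemma diagLen_injective : Function.Injective diagLen := fun S T h => by
  ext s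
  rw [← diagLen_succ_lt_diagLen_iff, h, diagLen_succ_lt_diagLen_iff]

lemma mem_armLengths {μ : YoungDiagram} {s : ℕ} :
    s ∈ armLengths μ ↔ ∃ i, μ.rowLen i = i + 1 + s := by
  simp only [armLengths, mem_image, mem_filter, YoungDiagram.mem_cells, Prod.exists,
    YoungDiagram.mem_iff_lt_rowLen]
  exact ⟨fun ⟨i, j, ⟨hj, hij⟩, hs⟩ => ⟨i, by omega⟩,
    fun ⟨i, hi⟩ => ⟨i, i, ⟨by omega, rfl⟩, by omega⟩⟩

lemma lt_diagLen_armLengths_iff {μ : YoungDiagram} {i d : ℕ} :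
    i < diagLen (armLengths μ) d ↔ (i, i + d) ∈ μ := by
  have hex : ∃ m, μ.rowLen m ≤ m + d :=
    ⟨μ.rowLen 0, (μ.rowLen_anti _ _ (Nat.zero_le _)).trans (Nat.le_add_right _ _)⟩
  have hlt (k : ℕ) : k < Nat.find hex ↔ k + d < μ.rowLen k := by
    rw [Nat.lt_find_iff]
    refine ⟨fun h => not_le.1 (h k le_rfl), fun h l hl => not_le.2 ?_⟩
    have := μ.rowLen_anti l k hl
    omega
  have himage : {s ∈ armLengths μ | d ≤ s} =
      (range (Nat.find hex)).image fun k => μ.rowLen k - (k + 1) := by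
    ext s
    simp only [mem_filter, mem_armLengths, mem_image, mem_range, hlt]
    grind
  have hinj : Set.InjOn (fun k => μ.rowLen k - (k + 1)) (range (Nat.find hex)) := by
    intro k hk l hl hkl
    simp only [coe_range, Set.mem_Iio, hlt] at hk hl hkl
    have := μ.rowLen_anti k l
    have := μ.rowLen_anti l k
    omega
  rw [diagLen, himage, card_image_of_injOn hinj, card_range, hlt, YoungDiagram.mem_iff_lt_rowLen]

lemma armLengths_subset_range_iff {μ : YoungDiagram} {n : ℕ} :
    armLengths μ ⊆ range n ↔ μ.rowLen 0 ≤ n := by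
  have h : 0 < diagLen (armLengths μ) n ↔ n < μ.rowLen 0 := by
    rw [lt_diagLen_armLengths_iff, YoungDiagram.mem_iff_lt_rowLen, zero_add]
  rw [← not_lt, ← h, diagLen, card_pos, not_nonempty_iff_eq_empty, filter_eq_empty_iff]
  simp [subset_iff]

/-- The self-conjugate Young diagram whose diagonal boxes have arm lengths `S`. -/
def ofArmLengths (S : Finset ℕ) : YoungDiagram where
  cells := {c ∈ range (S.sup id + 1) ×ˢ range (S.sup id + 1) |
    min c.1 c.2 < diagLen S (max c.1 c.2 - min c.1 c.2)}
  isLowerSet := by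
    rintro ⟨i, j⟩ ⟨i', j'⟩ ⟨hi, hj⟩ hc
    simp only [coe_filter, mem_product, mem_range, Set.mem_ofPred_eq] at hi hj hc ⊢
    refine ⟨by omega, ?_⟩
    have hmin := min_le_min hi hj
    have hmax := max_le_max hi hj
    obtain hle | hlt := le_or_gt (max i' j' - min i' j') (max i j - min i j)
    · exact hmin.trans_lt (hc.2.trans_le (diagLen_antitone S hle))
    · have hadd := diagLen_le_diagLen_add S (max i j - min i j)
        (max i' j' - min i' j' - (max i j - min i j))
      rw [Nat.add_sub_cancel' hlt.le] at hadd
      omega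

lemma mem_ofArmLengths {S : Finset ℕ} {i j : ℕ} :
    (i, j) ∈ ofArmLengths S ↔ min i j < diagLen S (max i j - min i j) := by
  have hS : S ⊆ range (S.sup id + 1) := fun s hs => mem_range_succ_iff.2 (le_sup (f := id) hs)
  have hle := diagLen_le_sub hS (max i j - min i j)
  simp only [← YoungDiagram.mem_cells, ofArmLengths, mem_filter, mem_product, mem_range]
  omega

lemma transpose_ofArmLengths (S : Finset ℕ) : (ofArmLengths S).transpose = ofArmLengths S := by
  ext ⟨i, j⟩
  simp [mem_ofArmLengths, min_comm, max_comm]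

lemma armLengths_ofArmLengths (S : Finset ℕ) : armLengths (ofArmLengths S) = S :=
  diagLen_injective <| funext fun d => eq_of_forall_lt_iff fun i => by
    simp [lt_diagLen_armLengths_iff, mem_ofArmLengths]

lemma swap_mem_iff {μ : YoungDiagram} (hμ : μ.transpose = μ) {c : ℕ × ℕ} :
    c.swap ∈ μ ↔ c ∈ μ := by
  rw [← YoungDiagram.mem_transpose, hμ]

lemma ofArmLengths_armLengths {μ : YoungDiagram} (hμ : μ.transpose = μ) :
    ofArmLengths (armLengths μ) = μ := by
  have hle {i j : ℕ} (hij : i ≤ j) : (i, j) ∈ ofArmLengths (armLengths μ) ↔ (i, j) ∈ μ := by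
    rw [mem_ofArmLengths, lt_diagLen_armLengths_iff, min_eq_left hij, max_eq_right hij,
      Nat.add_sub_cancel' hij]
  ext ⟨i, j⟩
  simp only [YoungDiagram.mem_cells]
  obtain hij | hij := le_total i j
  · exact hle hij
  · rw [← swap_mem_iff (transpose_ofArmLengths _), ← swap_mem_iff hμ]
    exact hle hij

lemma finsum_selfConjugate_eq_sum_ofArmLengths {M : Type*} [AddCommMonoid M] (n : ℕ)
    (f : YoungDiagram → M) :
    ∑ᶠ (μ : YoungDiagram) (_ : μ.transpose = μ ∧ μ.colLen 0 ≤ n), f μ =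
      ∑ S ∈ (range n).powerset, f (ofArmLengths S) := by
  have hrange {μ : YoungDiagram} (hμ : μ.transpose = μ) :
      armLengths μ ⊆ range n ↔ μ.colLen 0 ≤ n := by
    rw [armLengths_subset_range_iff, ← μ.rowLen_transpose, hμ]
  rw [← finsum_mem_coe_finset (fun S => f (ofArmLengths S))]
  refine (finsum_mem_eq_of_bijOn (M := M) (s := ↑(range n).powerset)
    (t := {μ | μ.transpose = μ ∧ μ.colLen 0 ≤ n}) ofArmLengths ⟨fun S hS => ?_,
      fun S _ T _ h => ?_, fun μ hμ => ?_⟩ fun _ _ => rfl).symm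
  · refine ⟨transpose_ofArmLengths S, (hrange (transpose_ofArmLengths S)).1 ?_⟩
    rw [armLengths_ofArmLengths]
    exact mem_powerset.1 (mem_coe.1 hS)
  · rw [← armLengths_ofArmLengths S, h, armLengths_ofArmLengths]
  · exact ⟨armLengths μ, mem_coe.2 (mem_powerset.2 ((hrange hμ.1).2 hμ.2)),
      ofArmLengths_armLengths hμ.1⟩

lemma card_filter_fst_le_snd (μ : YoungDiagram) :
    #{c ∈ μ.cells | c.1 ≤ c.2} = ∑ s ∈ armLengths μ, (s + 1) := by
  have hmaps : ∀ c ∈ {c ∈ μ.cells | c.1 ≤ c.2}, μ.rowLen c.1 - (c.1 + 1) ∈ armLengths μ := by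
    rintro ⟨i, j⟩ hc
    simp only [mem_filter, YoungDiagram.mem_cells, YoungDiagram.mem_iff_lt_rowLen] at hc
    exact mem_armLengths.2 ⟨i, by dsimp only; omega⟩
  rw [card_eq_sum_card_fiberwise hmaps]
  refine sum_congr rfl fun s hs => ?_
  obtain ⟨i, hi⟩ := mem_armLengths.1 hs
  have hfiber : {c ∈ {c ∈ μ.cells | c.1 ≤ c.2} | μ.rowLen c.1 - (c.1 + 1) = s} =
      (range (s + 1)).image fun t => (i, i + t) := by
    ext ⟨k, l⟩
    simp only [mem_filter, YoungDiagram.mem_cells, YoungDiagram.mem_iff_lt_rowLen, mem_image,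
      mem_range, Prod.mk.injEq]
    constructor
    · rintro ⟨⟨hl, hkl⟩, hk⟩
      have := μ.rowLen_anti i k
      have := μ.rowLen_anti k i
      exact ⟨l - k, by omega, by omega, by omega⟩
    · rintro ⟨t, ht, rfl, rfl⟩
      omega
  rw [hfiber, card_image_of_injective _ fun t u h => by simpa using h, card_range]

lemma card_add_durfeeRank {μ : YoungDiagram} (hμ : μ.transpose = μ) :
    μ.cells.card + durfeeRank μ = 2 * ∑ s ∈ armLengths μ, (s + 1) := by
  have hswap : #{c ∈ μ.cells | c.2 ≤ c.1} = #{c ∈ μ.cells | c.1 ≤ c.2} :=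
    card_nbij' Prod.swap Prod.swap
      (fun c hc => by simpa [swap_mem_iff hμ] using hc)
      (fun c hc => by simpa [swap_mem_iff hμ] using hc)
      (fun _ _ => rfl) (fun _ _ => rfl)
  have hunion : {c ∈ μ.cells | c.1 ≤ c.2} ∪ {c ∈ μ.cells | c.2 ≤ c.1} = μ.cells := by
    rw [← filter_or]
    exact filter_true_of_mem fun c _ => le_total _ _
  have hinter : {c ∈ μ.cells | c.1 ≤ c.2} ∩ {c ∈ μ.cells | c.2 ≤ c.1} =
      {c ∈ μ.cells | c.1 = c.2} := by
    rw [← filter_and]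
    simp only [le_antisymm_iff]
  have h := card_union_add_card_inter {c ∈ μ.cells | c.1 ≤ c.2} {c ∈ μ.cells | c.2 ≤ c.1}
  rwa [hunion, hinter, hswap, ← two_mul, card_filter_fst_le_snd] at h

end FrobeniusCoordinates

section SortingPermutation

open Finset

variable {n : ℕ} {μ : YoungDiagram}

lemma sign_eq_prod_of_strictAntiOn_of_strictMonoOn {σ : Equiv.Perm (Fin n)} {s : Finset (Fin n)}
    (hs : IsLowerSet (s : Set (Fin n))) (hanti : StrictAntiOn σ s)
    (hmono : StrictMonoOn σ (s : Set (Fin n))ᶜ) :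
    σ.sign = ∏ i ∈ s, (-1) ^ (σ i : ℕ) := by
  rw [Equiv.Perm.sign_eq_prod_prod_Ioi, ← Fintype.prod_ite_mem s]
  refine prod_congr rfl fun i _ => ?_
  split_ifs with hi
  · have hinv : {j ∈ Ioi i | ¬σ i < σ j} = (Iio (σ i)).map σ.symm.toEmbedding := by
      ext j
      simp only [mem_filter, mem_Ioi, not_lt, mem_map_equiv, Equiv.symm_symm, mem_Iio]
      refine ⟨fun ⟨hij, hle⟩ => hle.lt_of_ne (σ.injective.ne hij.ne'), fun hlt => ⟨?_, hlt.le⟩⟩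
      by_contra! hji
      obtain rfl | hji := hji.eq_or_lt
      · exact lt_irrefl _ hlt
      · exact hlt.asymm (hanti (hs hji.le hi) hi hji)
    rw [prod_ite, prod_const_one, one_mul, prod_const, hinv, card_map, Fin.card_Iio]
  · exact prod_eq_one fun j hj => if_pos <|
      hmono hi (fun hj' => hi (hs (mem_Ioi.1 hj).le hj')) (mem_Ioi.1 hj)

/-- The arm length of the `i`-th diagonal box if it lies in the diagram, and `i - μ_i` otherwise,
with `i` counted from `0`. -/
def frobeniusIndex (μ : YoungDiagram) (i : ℕ) : ℕ :=
  if i < μ.rowLen i then μ.rowLen i - (i + 1) else i - μ.rowLen i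

lemma rowLen_add_rowLen_ne (hμ : μ.transpose = μ) (i j : ℕ) :
    μ.rowLen i + μ.rowLen j ≠ i + j + 1 := by
  have h : j < μ.rowLen i ↔ i < μ.rowLen j := by
    rw [← YoungDiagram.mem_iff_lt_rowLen, ← YoungDiagram.mem_iff_lt_rowLen]
    exact swap_mem_iff hμ (c := (j, i))
  omega

lemma frobeniusIndex_injective (hμ : μ.transpose = μ) : Function.Injective (frobeniusIndex μ) := by
  intro i j hij
  have := rowLen_add_rowLen_ne hμ i j
  have := μ.rowLen_anti i j
  have := μ.rowLen_anti j i
  simp only [frobeniusIndex] at hij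
  split_ifs at hij <;> omega

lemma frobeniusIndex_lt (hn : μ.rowLen 0 ≤ n) {i : ℕ} (hi : i < n) : frobeniusIndex μ i < n := by
  have := μ.rowLen_anti 0 i (Nat.zero_le i)
  rw [frobeniusIndex]
  split_ifs <;> omega

lemma frobeniusIndex_mem_armLengths_iff (hμ : μ.transpose = μ) {i : ℕ} :
    frobeniusIndex μ i ∈ armLengths μ ↔ i < μ.rowLen i := by
  rw [mem_armLengths, frobeniusIndex]
  split_ifs with hi
  · exact iff_of_true ⟨i, by omega⟩ hi
  · refine iff_of_false (fun ⟨j, hj⟩ => ?_) hi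
    have := rowLen_add_rowLen_ne hμ i j
    omega

lemma frobeniusIndex_strictAntiOn (μ : YoungDiagram) :
    StrictAntiOn (frobeniusIndex μ) {i | i < μ.rowLen i} := by
  intro i (hi : i < μ.rowLen i) j (hj : j < μ.rowLen j) hij
  have := μ.rowLen_anti i j hij.le
  rw [frobeniusIndex, frobeniusIndex, if_pos hi, if_pos hj]
  omega

lemma frobeniusIndex_strictMonoOn (μ : YoungDiagram) :
    StrictMonoOn (frobeniusIndex μ) {i | i < μ.rowLen i}ᶜ := by
  intro i (hi : ¬i < μ.rowLen i) j (hj : ¬j < μ.rowLen j) hij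
  have := μ.rowLen_anti i j hij.le
  rw [frobeniusIndex, frobeniusIndex, if_neg hi, if_neg hj]
  omega

/-- The permutation `i ↦ frobeniusIndex μ i` of `{0, …, n - 1}`, for a self-conjugate diagram `μ`
with at most `n` rows. It sorts the exponents `μ + δ` of the numerator of the Schur polynomial. -/
noncomputable def frobeniusPerm (hμ : μ.transpose = μ) (hn : μ.rowLen 0 ≤ n) :
    Equiv.Perm (Fin n) :=
  Equiv.ofBijective (fun i => ⟨frobeniusIndex μ i, frobeniusIndex_lt hn i.isLt⟩) <|
    Finite.injective_iff_bijective.1 fun _ _ h =>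
      Fin.ext (frobeniusIndex_injective hμ (Fin.mk.inj h))

lemma val_frobeniusPerm (hμ : μ.transpose = μ) (hn : μ.rowLen 0 ≤ n) (i : Fin n) :
    (frobeniusPerm hμ hn i : ℕ) = frobeniusIndex μ i :=
  rfl

lemma sign_frobeniusPerm (hμ : μ.transpose = μ) (hn : μ.rowLen 0 ≤ n) :
    (frobeniusPerm hμ hn).sign = ∏ s ∈ armLengths μ, (-1) ^ s := by
  have hmem (i : Fin n) : i ∈ ({i | (i : ℕ) < μ.rowLen i} : Finset (Fin n)) ↔
      (i : ℕ) < μ.rowLen i := mem_filter_univ i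
  rw [sign_eq_prod_of_strictAntiOn_of_strictMonoOn (s := {i | (i : ℕ) < μ.rowLen i})]
  · refine prod_nbij (fun i => frobeniusIndex μ i)
      (fun i hi => (frobeniusIndex_mem_armLengths_iff hμ).2 ((hmem i).1 hi))
      (fun i _ j _ h => Fin.ext (frobeniusIndex_injective hμ h)) (fun s hs => ?_) fun _ _ => rfl
    obtain ⟨i, hi⟩ := mem_armLengths.1 hs
    have := μ.rowLen_anti 0 i (Nat.zero_le i)
    refine ⟨⟨i, by omega⟩, (hmem _).2 (by dsimp only; omega), ?_⟩
    dsimp only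
    rw [frobeniusIndex, if_pos (by omega)]
    omega
  · intro i j hji hi
    have := μ.rowLen_anti j i hji
    exact (hmem j).2 (lt_of_le_of_lt hji (((hmem i).1 hi).trans_le this))
  · exact fun i hi j hj hij => frobeniusIndex_strictAntiOn μ ((hmem i).1 hi) ((hmem j).1 hj) hij
  · exact fun i hi j hj hij =>
      frobeniusIndex_strictMonoOn μ (mt (hmem i).2 hi) (mt (hmem j).2 hj) hij

end SortingPermutation

section ReflectedStaircase

open Finset

variable {n : ℕ} {R : Type*} [CommRing R]

/-- The exponents obtained from `δ = (n - 1, …, 0)` by reflecting the entries indexed by `S` at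
`n - 1/2`, i.e. by replacing `n - 1 - i` with `n + i` for `i ∈ S`. -/
def reflectedStaircase (n : ℕ) (S : Finset ℕ) (i : Fin n) : ℕ :=
  if (i : ℕ) ∈ S then n + i else staircase n i

lemma sum_alternant_reflectedStaircase (x : Fin n → R) :
    ∑ S ∈ (range n).powerset, (-1) ^ #S * alternant x (reflectedStaircase n S) =
      (∏ i, (1 - x i)) * (∏ i, ∏ j ∈ Ioi i, (1 - x i * x j)) * alternant x (staircase n) := by
  rw [← det_weyl_denominator, det_pow_sub_pow_eq_sum_alternant,
    ← sum_map_valEmbedding_eq_sum_powerset_range]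
  refine sum_congr rfl fun S _ => ?_
  rw [card_map]
  congr 2
  ext i
  simp [reflectedStaircase, piecewise, Fin.val_inj]

variable {μ : YoungDiagram}

lemma alternant_rowLen_add_staircase (hμ : μ.transpose = μ) (hn : μ.rowLen 0 ≤ n) (x : Fin n → R) :
    alternant x (fun i => μ.rowLen i + staircase n i) =
      (∏ s ∈ armLengths μ, (-1) ^ s) * alternant x (reflectedStaircase n (armLengths μ)) := by
  have hperm : (fun i : Fin n => μ.rowLen i + staircase n i) =
      reflectedStaircase n (armLengths μ) ∘ frobeniusPerm hμ hn := by
    ext i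
    have hi := i.isLt
    have := μ.rowLen_anti 0 i (Nat.zero_le i)
    simp only [reflectedStaircase, staircase, Function.comp_apply, val_frobeniusPerm, Fin.val_rev,
      frobeniusIndex_mem_armLengths_iff hμ]
    rw [frobeniusIndex]
    split_ifs <;> omega
  rw [hperm, alternant_comp_perm, sign_frobeniusPerm]
  push_cast
  rfl

lemma smul_schurPoly_mul_alternant_staircase (hμ : μ.transpose = μ) (hn : μ.rowLen 0 ≤ n) :
    ((-1 : ℚ) ^ ((μ.cells.card + durfeeRank μ) / 2) • schurPoly n μ) *
        alternant X (staircase n) =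
      (-1) ^ #(armLengths μ) * alternant X (reflectedStaircase n (armLengths μ)) := by
  have hsign : C ((-1 : ℚ) ^ ((μ.cells.card + durfeeRank μ) / 2)) =
      (-1 : MvPolynomial (Fin n) ℚ) ^ (∑ s ∈ armLengths μ, s) * (-1) ^ #(armLengths μ) := by
    rw [card_add_durfeeRank hμ, Nat.mul_div_cancel_left _ two_pos, sum_add_distrib,
      ← card_eq_sum_ones, ← pow_add, map_pow, map_neg, map_one]
  have hsq : (-1 : MvPolynomial (Fin n) ℚ) ^ (∑ s ∈ armLengths μ, s) *
      (-1) ^ (∑ s ∈ armLengths μ, s) = 1 := pow_mul_pow_eq_one _ (by norm_num)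
  rw [smul_mul_assoc, schurPoly_mul_alternant_staircase, alternant_rowLen_add_staircase hμ hn,
    smul_eq_C_mul, hsign, prod_pow_eq_pow_sum]
  linear_combination
    (-1) ^ #(armLengths μ) * alternant X (reflectedStaircase n (armLengths μ)) * hsq

end ReflectedStaircase

/-- `Σ_{λ ∈ F₀, ℓ(λ) ≤ n} (-1)^{(|λ|+r(λ))/2} s_λ(x) = Π_i (1-x_i) Π_{i<j} (1-x_i x_j)`,
the sum running over self-conjugate partitions with at most `n` rows. -/
theorem selfConjugate_schur_sum (n : ℕ) :
    (∑ᶠ (μ : YoungDiagram) (_ : μ.transpose = μ ∧ μ.colLen 0 ≤ n),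
        ((-1 : ℚ) ^ ((μ.cells.card + durfeeRank μ) / 2)) • schurPoly n μ)
      = (∏ i : Fin n, (1 - X i)) *
        ∏ p ∈ Finset.univ.filter (fun p : Fin n × Fin n => p.1 < p.2),
          (1 - X p.1 * X p.2) := by
  refine mul_right_cancel₀ (alternant_staircase_ne_zero (X_injective (R := ℚ))) ?_
  rw [finsum_selfConjugate_eq_sum_ofArmLengths, Finset.sum_mul,
    prod_filter_lt_eq_prod_prod_Ioi fun i j => 1 - X i * X j,
    ← sum_alternant_reflectedStaircase]
  refine Finset.sum_congr rfl fun S hS => ?_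
  have hn : (ofArmLengths S).rowLen 0 ≤ n := by
    rw [← armLengths_subset_range_iff, armLengths_ofArmLengths]
    exact Finset.mem_powerset.1 hS
  rw [smul_schurPoly_mul_alternant_staircase (transpose_ofArmLengths S) hn,
    armLengths_ofArmLengths]
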